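/- Let E be a measurable space, let π_1, …, π_M be probability measures on E, let w_1, …, w_M > 0 with Σ_k w_k = 1, and let π = Σ_k w_k π_k. For a probability measure μ and a measurable function g with 0 < a ≤ g ≤ b on E, let Ent_μ(g) = ∫ g log g dμ − (∫ g dμ) log(∫ g dμ). Then for every measurable g : E → ℝ with 0 < a ≤ g ≤ b for some constants a, b: Ent_π(g) = Σ_{k=1}^{M} w_k Ent_{π_k}(g) + Σ_{k=1}^{M} w_k (∫ g dπ_k) log( (∫ g dπ_k) / (∫ g dπ) ). -/

import Mathlib

open MeasureTheory

/-- The entropy functional `Ent_μ(g) = ∫ g log g dμ − (∫ g dμ) log(∫ g dμ)`. -/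
noncomputable def entI {E : Type*} [MeasurableSpace E] (μ : Measure E) (g : E → ℝ) : ℝ :=
  ∫ x, g x * Real.log (g x) ∂μ - (∫ x, g x ∂μ) * Real.log (∫ x, g x ∂μ)

/-!
Integration is linear in the measure, so only the nonlinear term `(∫ g) log (∫ g)` of the entropy
fails to split over the components. Its defect is the entropy of the component means under the
weights `w`, and `log (x / y) = log x - log y` turns that entropy into the second sum.
-/

theorem sum_mul_mul_log_div_sum {ι : Type*} {s : Finset ι} {w x : ι → ℝ}
    (hw : ∀ k ∈ s, 0 ≤ w k) (hx : ∀ k ∈ s, 0 ≤ x k) :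
    ∑ k ∈ s, w k * x k * Real.log (x k / ∑ j ∈ s, w j * x j) =
      ∑ k ∈ s, w k * (x k * Real.log (x k)) -
        (∑ k ∈ s, w k * x k) * Real.log (∑ k ∈ s, w k * x k) := by
  have hwx : ∀ k ∈ s, 0 ≤ w k * x k := fun k hk => mul_nonneg (hw k hk) (hx k hk)
  rw [Finset.sum_mul, ← Finset.sum_sub_distrib]
  refine Finset.sum_congr rfl fun k hk => ?_
  rcases eq_or_ne (w k * x k) 0 with hzero | hne
  · simp only [← mul_assoc, hzero, zero_mul, sub_zero]
  · have hmean : 0 < ∑ j ∈ s, w j * x j :=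
      Finset.sum_pos' hwx ⟨k, hk, (hwx k hk).lt_of_ne' hne⟩
    rw [Real.log_div (right_ne_zero_of_mul hne) hmean.ne']
    ring

section Integration

variable {E F : Type*} [MeasurableSpace E] [NormedAddCommGroup F]

theorem integral_sum_ofReal_smul_measure [NormedSpace ℝ F] {ι : Type*} {s : Finset ι}
    {π : ι → Measure E} {w : ι → ℝ} {f : E → F}
    (hw : ∀ k ∈ s, 0 ≤ w k) (hf : ∀ k ∈ s, Integrable f (π k)) :
    ∫ x, f x ∂(∑ k ∈ s, ENNReal.ofReal (w k) • π k) = ∑ k ∈ s, w k • ∫ x, f x ∂(π k) := by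
  rw [integral_finsetSum_measure
    fun k hk => (hf k hk).smul_measure ENNReal.ofReal_ne_top]
  refine Finset.sum_congr rfl fun k hk => ?_
  rw [integral_smul_measure, ENNReal.toReal_ofReal (hw k hk)]

theorem integrable_continuous_comp_of_ae_mem_isCompact {X : Type*} [TopologicalSpace X]
    {μ : Measure E} [IsFiniteMeasure μ] {φ : X → F} {g : E → X} {K : Set X}
    (hφ : Continuous φ) (hK : IsCompact K) (hg : AEStronglyMeasurable g μ)
    (hgK : ∀ᵐ x ∂μ, g x ∈ K) : Integrable (fun x => φ (g x)) μ := by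
  obtain ⟨C, hC⟩ := hK.exists_bound_of_continuousOn hφ.continuousOn
  exact .of_bound (hφ.comp_aestronglyMeasurable hg) C (hgK.mono fun x hx => hC (g x) hx)

end Integration

theorem stmt_9_general {E ι : Type*} [MeasurableSpace E] [Fintype ι]
    (π : ι → Measure E) (w : ι → ℝ) (hw : ∀ k, 0 ≤ w k)
    (πm : Measure E) (hπm : πm = ∑ k, ENNReal.ofReal (w k) • π k)
    (g : E → ℝ) (hg_nonneg : ∀ k, 0 ≤ᵐ[π k] g) (hg : ∀ k, Integrable g (π k))
    (hg_log : ∀ k, Integrable (fun x => g x * Real.log (g x)) (π k)) :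
    entI πm g = (∑ k, w k * entI (π k) g)
      + ∑ k, w k * (∫ x, g x ∂(π k)) *
          Real.log ((∫ x, g x ∂(π k)) / ∫ x, g x ∂πm) := by
  have integral_mixture : ∀ f : E → ℝ, (∀ k, Integrable f (π k)) →
      ∫ x, f x ∂πm = ∑ k, w k * ∫ x, f x ∂(π k) := fun f hf =>
    hπm ▸ integral_sum_ofReal_smul_measure (fun k _ => hw k) fun k _ => hf k
  have entropy_of_means := sum_mul_mul_log_div_sum (s := Finset.univ) (fun k _ => hw k)
    fun k _ => integral_nonneg_of_ae (hg_nonneg k)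
  simp only [entI, mul_sub, Finset.sum_sub_distrib]
  rw [integral_mixture _ hg_log, integral_mixture g hg, entropy_of_means]
  ring

theorem stmt_9 {E : Type*} [MeasurableSpace E] (M : ℕ)
    (π : Fin M → Measure E) [∀ k, IsProbabilityMeasure (π k)]
    (w : Fin M → ℝ) (hw : ∀ k, 0 < w k) (hwsum : ∑ k, w k = 1)
    (πm : Measure E) (hπm : πm = ∑ k, ENNReal.ofReal (w k) • π k) :
    ∀ g : E → ℝ, Measurable g →
      ∀ a b : ℝ, 0 < a → (∀ x, a ≤ g x) → (∀ x, g x ≤ b) →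
        entI πm g = (∑ k, w k * entI (π k) g)
          + ∑ k, w k * (∫ x, g x ∂(π k)) *
              Real.log ((∫ x, g x ∂(π k)) / ∫ x, g x ∂πm) := by
  intro g hg a b ha hag hgb
  have integrable_comp : ∀ φ : ℝ → ℝ, Continuous φ → ∀ k, Integrable (fun x => φ (g x)) (π k) :=
    fun φ hφ k => integrable_continuous_comp_of_ae_mem_isCompact hφ isCompact_Icc
      hg.aestronglyMeasurable (.of_forall fun x => ⟨hag x, hgb x⟩)
  exact stmt_9_general π w (fun k => (hw k).le) πm hπm g
    (fun k => .of_forall fun x => ha.le.trans (hag x))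
    (integrable_comp id continuous_id) (integrable_comp _ Real.continuous_mul_log)
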